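/- arXiv:2310.00571 — 2 statements merged into one kernel-verified Lean document; each statement's English description precedes it below -/
import Mathlib

section
/- Consider the parametric linear program LP(θ). Fix an index set J ⊆ {1,…,m} with cardinality n such that G_J is invertible, and suppose there exists λ ∈ ℝᵐ with λ ≥ 0 componentwise, c + Gᵀλ = 0, and λ_j = 0 for every j ∉ J. Define the affine map x̂(θ) := G_J⁻¹ (w_J + F_J θ). Then for every θ ∈ ℝᵖ such that G x̂(θ) ≤ w + F θ (in particular for every θ in the critical region where additionally G_J̄ x̂(θ) < w_J̄ + F_J̄ θ), the point x̂(θ) is an optimal solution of LP(θ). -/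
/-! Weak duality with complementary slackness. Stationarity `c + Gᵀ lam = 0` turns the
objective into `c ⬝ᵥ y = -(lam ⬝ᵥ G y)`. The constraints indexed by `σ` are active at `x̂(θ)`,
so there `G x' ≤ w + F θ = G x̂(θ)` for any feasible `x'`; the remaining constraints have
multiplier zero. Hence `lam ⬝ᵥ G x' ≤ lam ⬝ᵥ G x̂(θ)`. -/

open Matrix BigOperators

/-- For the parametric LP `min cᵀx s.t. G x ≤ w + F θ`, fix an index set
`J` of cardinality `n` (enumerated by the injection `σ : Fin n → Fin m`) with `G_J`
invertible, and suppose there is a multiplier `lam ≥ 0` with `c + Gᵀ lam = 0` and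
`lam j = 0` for `j ∉ J`.  Let `x̂(θ) := G_J⁻¹ (w_J + F_J θ)`.  Then for every `θ` such
that `G x̂(θ) ≤ w + F θ` (in particular for every `θ` in the associated critical region),
the point `x̂(θ)` is an optimal solution of LP(θ). -/
theorem stmt3 {n m p : ℕ}
    (c : Fin n → ℝ) (G : Matrix (Fin m) (Fin n) ℝ) (w : Fin m → ℝ)
    (F : Matrix (Fin m) (Fin p) ℝ)
    (σ : Fin n → Fin m) (hσ : Function.Injective σ)
    (hinv : IsUnit (G.submatrix σ (id : Fin n → Fin n)))
    (hlam : ∃ lam : Fin m → ℝ, (∀ j, 0 ≤ lam j) ∧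
      c + Gᵀ.mulVec lam = 0 ∧ ∀ j : Fin m, j ∉ Set.range σ → lam j = 0) :
    ∀ θ : Fin p → ℝ,
      (∀ j, G.mulVec ((G.submatrix σ (id : Fin n → Fin n))⁻¹.mulVec
          (fun i => w (σ i) + (F.submatrix σ (id : Fin p → Fin p)).mulVec θ i)) j
        ≤ w j + F.mulVec θ j) →
      ∀ x' : Fin n → ℝ, (∀ j, G.mulVec x' j ≤ w j + F.mulVec θ j) →
        c ⬝ᵥ ((G.submatrix σ (id : Fin n → Fin n))⁻¹.mulVec
          (fun i => w (σ i) + (F.submatrix σ (id : Fin p → Fin p)).mulVec θ i)) ≤ c ⬝ᵥ x' := by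
  intro θ _ x' hx'
  obtain ⟨lam, hnonneg, hstat, hsupp⟩ := hlam
  set x := (G.submatrix σ (id : Fin n → Fin n))⁻¹.mulVec
    (fun i => w (σ i) + (F.submatrix σ (id : Fin p → Fin p)).mulVec θ i) with hx
  have hactive : ∀ i, G.mulVec x (σ i) = w (σ i) + F.mulVec θ (σ i) := by
    intro i
    have h : (G.submatrix σ (id : Fin n → Fin n)).mulVec x =
        fun i => w (σ i) + (F.submatrix σ (id : Fin p → Fin p)).mulVec θ i := by
      rw [hx, mulVec_mulVec, mul_nonsing_inv _ ((isUnit_iff_isUnit_det _).mp hinv), one_mulVec]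
    exact congrFun h i
  have hc : ∀ y, c ⬝ᵥ y = -(lam ⬝ᵥ G.mulVec y) := by
    intro y
    rw [eq_neg_of_add_eq_zero_left hstat, neg_dotProduct, mulVec_transpose, dotProduct_mulVec]
  rw [hc, hc, neg_le_neg_iff]
  refine Finset.sum_le_sum fun j _ => ?_
  by_cases hj : j ∈ Set.range σ
  · obtain ⟨i, rfl⟩ := hj
    exact mul_le_mul_of_nonneg_left ((hx' _).trans_eq (hactive i).symm) (hnonneg _)
  · simp [hsupp j hj]
end

section
/- Consider the parametric linear program LP(θ). Fix an index set J ⊆ {1,…,m} with cardinality n such that G_J is invertible, and suppose there exists λ ∈ ℝᵐ with λ ≥ 0 componentwise, c + Gᵀλ = 0, and λ_j = 0 for every j ∉ J. Then for every θ ∈ ℝᵖ such that x̂(θ) := G_J⁻¹ (w_J + F_J θ) satisfies G x̂(θ) ≤ w + F θ, the optimal value of LP(θ) equals cᵀ G_J⁻¹ (w_J + F_J θ); consequently, on this set of parameters the optimal-value function is an affine function of θ. -/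
open Matrix BigOperators

/-!
Weak duality and complementary slackness. Since `c = -Gᵀ lam`, the objective is
`c ⬝ᵥ x = -(lam ⬝ᵥ G x)`, so `lam ≥ 0` bounds it below by `-(lam ⬝ᵥ (w + F θ))` on the feasible
set. The point `x̂(θ)` makes every constraint indexed by `J` tight, and `lam` vanishes off `J`,
so `x̂(θ)` attains this bound; being feasible, it is a minimizer. As the minimum is attained,
the real-valued `sInf` is the true optimal value.
-/

/-- Under the hypotheses of Statement 3 (index set `J` of cardinality `n`
enumerated by the injection `σ`, `G_J` invertible, and a multiplier `lam ≥ 0` with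
`c + Gᵀ lam = 0` supported on `J`), for every `θ` such that `x̂(θ) := G_J⁻¹ (w_J + F_J θ)`
is feasible, the optimal value of LP(θ) (the infimum of `cᵀx` over the feasible set)
equals `cᵀ G_J⁻¹ (w_J + F_J θ)`; consequently the optimal-value function is affine in `θ`
on this set of parameters. -/
theorem stmt4 {n m p : ℕ}
    (c : Fin n → ℝ) (G : Matrix (Fin m) (Fin n) ℝ) (w : Fin m → ℝ)
    (F : Matrix (Fin m) (Fin p) ℝ)
    (σ : Fin n → Fin m) (hσ : Function.Injective σ)
    (hinv : IsUnit (G.submatrix σ (id : Fin n → Fin n)))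
    (hlam : ∃ lam : Fin m → ℝ, (∀ j, 0 ≤ lam j) ∧
      c + Gᵀ.mulVec lam = 0 ∧ ∀ j : Fin m, j ∉ Set.range σ → lam j = 0) :
    ∀ θ : Fin p → ℝ,
      (∀ j, G.mulVec ((G.submatrix σ (id : Fin n → Fin n))⁻¹.mulVec
          (fun i => w (σ i) + (F.submatrix σ (id : Fin p → Fin p)).mulVec θ i)) j
        ≤ w j + F.mulVec θ j) →
      sInf {v : ℝ | ∃ x : Fin n → ℝ, (∀ j, G.mulVec x j ≤ w j + F.mulVec θ j) ∧ v = c ⬝ᵥ x}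
        = c ⬝ᵥ ((G.submatrix σ (id : Fin n → Fin n))⁻¹.mulVec
          (fun i => w (σ i) + (F.submatrix σ (id : Fin p → Fin p)).mulVec θ i)) := by
  obtain ⟨lam, hnonneg, hstat, hsupp⟩ := hlam
  intro θ hfeas
  set xhat := (G.submatrix σ (id : Fin n → Fin n))⁻¹.mulVec
    (fun i => w (σ i) + (F.submatrix σ (id : Fin p → Fin p)).mulVec θ i) with hxhat
  have hobj : ∀ x : Fin n → ℝ, c ⬝ᵥ x = -(lam ⬝ᵥ G.mulVec x) := by
    intro x
    rw [eq_neg_of_add_eq_zero_left hstat, neg_dotProduct, mulVec_transpose, dotProduct_mulVec]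
  have htight : ∀ i, G.mulVec xhat (σ i) = w (σ i) + F.mulVec θ (σ i) := by
    intro i
    have h : (G.submatrix σ (id : Fin n → Fin n)).mulVec xhat
        = fun i => w (σ i) + (F.submatrix σ (id : Fin p → Fin p)).mulVec θ i := by
      rw [hxhat, mulVec_mulVec,
        mul_nonsing_inv _ ((isUnit_iff_isUnit_det _).mp hinv), one_mulVec]
    exact congrFun h i
  refine IsLeast.csInf_eq ⟨⟨xhat, hfeas, rfl⟩, ?_⟩
  rintro v ⟨x, hx, rfl⟩
  rw [hobj, hobj, neg_le_neg_iff]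
  refine Finset.sum_le_sum fun j _ => ?_
  by_cases hj : j ∈ Set.range σ
  · obtain ⟨i, rfl⟩ := hj
    rw [htight i]
    exact mul_le_mul_of_nonneg_left (hx _) (hnonneg _)
  · simp [hsupp j hj]
end
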